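/- arXiv:2507.09309 — 2 statements merged into one kernel-verified Lean document; each statement's English description precedes it below -/
import Mathlib

section
/- Suppose a hybrid zonotope has no equality constraints (n_c = 0) and its continuous generator matrix G^c ∈ ℝ^{n×n} is invertible, so that its leaves are Z_{c,i} = { G^c ξ + c + G^b ξ^b_i : ‖ξ‖_∞ ≤ 1 } and Z_{c,j} = { G^c ξ + c + G^b ξ^b_j : ‖ξ‖_∞ ≤ 1 }. Then the intersection Z_{c,i} ∩ Z_{c,j} has nonempty topological interior in ℝ^n if and only if there exist ξ^c, Δξ^c ∈ ℝ^n with G^c Δξ^c = G^b (ξ^b_j − ξ^b_i), |ξ^c_k| < 1 and |ξ^c_k − Δξ^c_k| < 1 for every coordinate k. Otherwise, if a pair (ξ^c, Δξ^c) satisfying these equations with the non-strict bounds ‖ξ^c‖_∞ ≤ 1 and ‖ξ^c − Δξ^c‖_∞ ≤ 1 exists but no strictly interior pair exists, the intersection is nonempty but has empty interior (tangent contact). -/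
open Matrix

/-- The leaf of a hybrid zonotope with no equality constraints (`n_c = 0`):
`{ Gᶜ ξ + c + Gᵇ ξb : ‖ξ‖_∞ ≤ 1 }`. -/
def HybridZonotope.leafNoCon {n nb : ℕ}
    (Gc : Matrix (Fin n) (Fin n) ℝ) (Gb : Matrix (Fin n) (Fin nb) ℝ)
    (c : Fin n → ℝ) (ξb : Fin nb → ℝ) : Set (Fin n → ℝ) :=
  {z | ∃ ξ : Fin n → ℝ, (∀ k, |ξ k| ≤ 1) ∧ z = Gc *ᵥ ξ + c + Gb *ᵥ ξb}

/-! Each leaf is the image of the closed unit ball of the sup norm under `ξ ↦ Gᶜ ξ + (c + Gᵇ ξᵇ)`,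
a homeomorphism when `Gᶜ` is invertible, so its interior is the image of the open unit ball. The
images of `S` under `L · + a` and of `T` under `L · + b` meet exactly when `L x + a = L y + b` for
some `x ∈ S` and `y ∈ T`, that is, when `Δ = x - y` solves `L Δ = b - a`. Applied to closed balls
this gives the feasible pairs, and applied to open balls the strictly feasible ones. -/

theorem image_add_inter_image_add_nonempty_iff {E F 𝓕 : Type*} [AddCommGroup E] [AddCommGroup F]
    [FunLike 𝓕 E F] [AddMonoidHomClass 𝓕 E F] (f : 𝓕) (a b : F) (S T : Set E) :
    ((fun x => f x + a) '' S ∩ (fun x => f x + b) '' T).Nonempty ↔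
      ∃ x d, f d = b - a ∧ x ∈ S ∧ x - d ∈ T := by
  constructor
  · rintro ⟨_, ⟨x, hx, rfl⟩, y, hy, hxy : f y + b = f x + a⟩
    refine ⟨x, x - y, ?_, hx, by rwa [sub_sub_cancel]⟩
    rw [map_sub, sub_eq_sub_iff_add_eq_add, ← hxy, add_comm]
  · rintro ⟨x, d, hd, hx, hxd⟩
    refine ⟨f x + a, ⟨x, hx, rfl⟩, x - d, hxd, ?_⟩
    simp only [map_sub, hd]
    abel

theorem isHomeomorph_mulVec_add {ι R : Type*} [Fintype ι] [DecidableEq ι] [CommRing R]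
    [TopologicalSpace R] [IsTopologicalRing R] {A : Matrix ι ι R} (hA : IsUnit A) (v : ι → R) :
    IsHomeomorph fun x => A *ᵥ x + v := by
  have hdet : IsUnit A.det := (isUnit_iff_isUnit_det A).1 hA
  refine isHomeomorph_iff_exists_inverse.2
    ⟨by fun_prop, fun y => A⁻¹ *ᵥ (y - v), fun x => ?_, fun y => ?_, by fun_prop⟩
  · simp [mulVec_mulVec, nonsing_inv_mul A hdet]
  · simp [mulVec_mulVec, mul_nonsing_inv A hdet]

namespace HybridZonotope

variable {n nb : ℕ} (Gc : Matrix (Fin n) (Fin n) ℝ) (Gb : Matrix (Fin n) (Fin nb) ℝ)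
  (c : Fin n → ℝ)

theorem leafNoCon_eq_image_closedBall (ξb : Fin nb → ℝ) :
    leafNoCon Gc Gb c ξb =
      (fun ξ => Gc.mulVecLin ξ + (c + Gb *ᵥ ξb)) '' Metric.closedBall 0 1 := by
  ext z
  simp [leafNoCon, pi_norm_le_iff_of_nonneg, add_assoc, eq_comm]

theorem leafNoCon_inter_nonempty_iff (ξbi ξbj : Fin nb → ℝ) :
    (leafNoCon Gc Gb c ξbi ∩ leafNoCon Gc Gb c ξbj).Nonempty ↔
      ∃ ξc Δξc : Fin n → ℝ, Gc *ᵥ Δξc = Gb *ᵥ (ξbj - ξbi) ∧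
        (∀ k, |ξc k| ≤ 1) ∧ (∀ k, |ξc k - Δξc k| ≤ 1) := by
  rw [leafNoCon_eq_image_closedBall, leafNoCon_eq_image_closedBall,
    image_add_inter_image_add_nonempty_iff]
  simp only [mem_closedBall_zero_iff, pi_norm_le_iff_of_nonneg zero_le_one, Real.norm_eq_abs,
    Pi.sub_apply, add_sub_add_left_eq_sub, mulVec_sub, mulVecLin_apply]

variable {Gc}

theorem interior_leafNoCon_eq_image_ball (hGc : IsUnit Gc) (ξb : Fin nb → ℝ) :
    interior (leafNoCon Gc Gb c ξb) =
      (fun ξ => Gc.mulVecLin ξ + (c + Gb *ᵥ ξb)) '' Metric.ball 0 1 := by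
  have hhomeo : IsHomeomorph fun ξ => Gc.mulVecLin ξ + (c + Gb *ᵥ ξb) :=
    isHomeomorph_mulVec_add hGc _
  rw [leafNoCon_eq_image_closedBall, ← interior_closedBall _ one_ne_zero]
  exact (hhomeo.image_interior _).symm

theorem interior_leafNoCon_inter_nonempty_iff (hGc : IsUnit Gc) (ξbi ξbj : Fin nb → ℝ) :
    (interior (leafNoCon Gc Gb c ξbi ∩ leafNoCon Gc Gb c ξbj)).Nonempty ↔
      ∃ ξc Δξc : Fin n → ℝ, Gc *ᵥ Δξc = Gb *ᵥ (ξbj - ξbi) ∧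
        (∀ k, |ξc k| < 1) ∧ (∀ k, |ξc k - Δξc k| < 1) := by
  rw [interior_inter, interior_leafNoCon_eq_image_ball Gb c hGc,
    interior_leafNoCon_eq_image_ball Gb c hGc, image_add_inter_image_add_nonempty_iff]
  simp only [mem_ball_zero_iff, pi_norm_lt_iff zero_lt_one, Real.norm_eq_abs,
    Pi.sub_apply, add_sub_add_left_eq_sub, mulVec_sub, mulVecLin_apply]

end HybridZonotope

theorem inter_interior_iff_strict_feasible_general {n nb : ℕ}
    (Gc : Matrix (Fin n) (Fin n) ℝ) (hGc : IsUnit Gc)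
    (Gb : Matrix (Fin n) (Fin nb) ℝ) (c : Fin n → ℝ)
    (ξbi ξbj : Fin nb → ℝ) :
    ((interior (HybridZonotope.leafNoCon Gc Gb c ξbi ∩
        HybridZonotope.leafNoCon Gc Gb c ξbj)).Nonempty ↔
      (∃ ξc Δξc : Fin n → ℝ, Gc *ᵥ Δξc = Gb *ᵥ (ξbj - ξbi) ∧
        (∀ k, |ξc k| < 1) ∧ (∀ k, |ξc k - Δξc k| < 1))) ∧
    ((∃ ξc Δξc : Fin n → ℝ, Gc *ᵥ Δξc = Gb *ᵥ (ξbj - ξbi) ∧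
        (∀ k, |ξc k| ≤ 1) ∧ (∀ k, |ξc k - Δξc k| ≤ 1)) →
      ¬ (∃ ξc Δξc : Fin n → ℝ, Gc *ᵥ Δξc = Gb *ᵥ (ξbj - ξbi) ∧
        (∀ k, |ξc k| < 1) ∧ (∀ k, |ξc k - Δξc k| < 1)) →
      (HybridZonotope.leafNoCon Gc Gb c ξbi ∩
        HybridZonotope.leafNoCon Gc Gb c ξbj).Nonempty ∧
      interior (HybridZonotope.leafNoCon Gc Gb c ξbi ∩
        HybridZonotope.leafNoCon Gc Gb c ξbj) = ∅) := by
  have interior_nonempty_iff :=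
    HybridZonotope.interior_leafNoCon_inter_nonempty_iff Gb c hGc ξbi ξbj
  refine ⟨interior_nonempty_iff, fun hfeasible hnot_strict => ⟨?_, ?_⟩⟩
  · exact (HybridZonotope.leafNoCon_inter_nonempty_iff Gc Gb c ξbi ξbj).2 hfeasible
  · rwa [← Set.not_nonempty_iff_eq_empty, interior_nonempty_iff]

/-- Tangent contact vs. interior overlap for two leaves of a hybrid zonotope
with no equality constraints and invertible continuous generator matrix:
the intersection has nonempty interior iff a strictly interior feasible pair
exists; and if a feasible pair exists but no strictly interior one does, the
intersection is nonempty with empty interior (tangent contact). -/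
theorem inter_interior_iff_strict_feasible {n nb : ℕ}
    (Gc : Matrix (Fin n) (Fin n) ℝ) (hGc : IsUnit Gc)
    (Gb : Matrix (Fin n) (Fin nb) ℝ) (c : Fin n → ℝ)
    (ξbi ξbj : Fin nb → ℝ)
    (hbi : ∀ k, ξbi k = 1 ∨ ξbi k = -1) (hbj : ∀ k, ξbj k = 1 ∨ ξbj k = -1) :
    ((interior (HybridZonotope.leafNoCon Gc Gb c ξbi ∩
        HybridZonotope.leafNoCon Gc Gb c ξbj)).Nonempty ↔
      (∃ ξc Δξc : Fin n → ℝ, Gc *ᵥ Δξc = Gb *ᵥ (ξbj - ξbi) ∧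
        (∀ k, |ξc k| < 1) ∧ (∀ k, |ξc k - Δξc k| < 1))) ∧
    ((∃ ξc Δξc : Fin n → ℝ, Gc *ᵥ Δξc = Gb *ᵥ (ξbj - ξbi) ∧
        (∀ k, |ξc k| ≤ 1) ∧ (∀ k, |ξc k - Δξc k| ≤ 1)) →
      ¬ (∃ ξc Δξc : Fin n → ℝ, Gc *ᵥ Δξc = Gb *ᵥ (ξbj - ξbi) ∧
        (∀ k, |ξc k| < 1) ∧ (∀ k, |ξc k - Δξc k| < 1)) →
      (HybridZonotope.leafNoCon Gc Gb c ξbi ∩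
        HybridZonotope.leafNoCon Gc Gb c ξbj).Nonempty ∧
      interior (HybridZonotope.leafNoCon Gc Gb c ξbi ∩
        HybridZonotope.leafNoCon Gc Gb c ξbj) = ∅) :=
  inter_interior_iff_strict_feasible_general Gc hGc Gb c ξbi ξbj
end

section
/- Let Z_{c,i} and Z_{c,j} be leaves of a hybrid zonotope with Δξ^b = ξ^b_j − ξ^b_i, let M = [G^c; A^c], N = [G^b; A^b], and let P satisfy M P M = M, with L = (I − M P) N. Then Z_{c,i} ∩ Z_{c,j} ≠ ∅ if and only if L Δξ^b = 0 and there exist ξ^c, Δξ^c ∈ ℝ^{n_g} with M Δξ^c = N Δξ^b, A^c ξ^c = b − A^b ξ^b_i, ‖ξ^c‖_∞ ≤ 1 and ‖ξ^c − Δξ^c‖_∞ ≤ 1. -/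
open Matrix

/-- The leaf of a hybrid zonotope associated with a binary vector `ξb`. -/
def HybridZonotope.leaf {n ng nb nc : ℕ}
    (Gc : Matrix (Fin n) (Fin ng) ℝ) (Gb : Matrix (Fin n) (Fin nb) ℝ)
    (Ac : Matrix (Fin nc) (Fin ng) ℝ) (Ab : Matrix (Fin nc) (Fin nb) ℝ)
    (c : Fin n → ℝ) (b : Fin nc → ℝ) (ξb : Fin nb → ℝ) : Set (Fin n → ℝ) :=
  {z | ∃ ξ : Fin ng → ℝ, (∀ k, |ξ k| ≤ 1) ∧ Ac *ᵥ ξ = b - Ab *ᵥ ξb ∧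
    z = Gc *ᵥ ξ + c + Gb *ᵥ ξb}

/-! Let `ξ` satisfy the constraint of the leaf of `ξbi`. A vector `η` satisfies the constraint of
the leaf of `ξbj` and generates the same point there exactly when `Δξ = ξ - η` solves
`M Δξ = N (ξbj - ξbi)`: the rows of `Gᶜ` equate the two points, and the rows of `Aᶜ` transfer the
constraint from one leaf to the other. Since `M P` is a projection onto the column space of `M`,
such a `Δξ` exists only if `L (ξbj - ξbi) = 0`. -/

theorem exists_mulVec_eq_iff_one_sub_mul_mulVec_eq_zero {R m n : Type*} [Ring R] [Fintype m]
    [DecidableEq m] [Fintype n] {M : Matrix m n R} {P : Matrix n m R} (hP : M * P * M = M)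
    (v : m → R) : (∃ x, M *ᵥ x = v) ↔ (1 - M * P) *ᵥ v = 0 := by
  constructor
  · rintro ⟨x, rfl⟩
    rw [mulVec_mulVec, Matrix.sub_mul, Matrix.one_mul, hP, sub_self, zero_mulVec]
  · intro hv
    refine ⟨P *ᵥ v, ?_⟩
    rw [sub_mulVec, one_mulVec, sub_eq_zero] at hv
    rw [mulVec_mulVec, ← hv]

theorem fromRows_mulVec_eq_fromRows_mulVec_iff {R m₁ m₂ n p : Type*} [Semiring R] [Fintype n]
    [Fintype p] (A₁ : Matrix m₁ n R) (A₂ : Matrix m₂ n R) (B₁ : Matrix m₁ p R)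
    (B₂ : Matrix m₂ p R) (x : n → R) (y : p → R) :
    fromRows A₁ A₂ *ᵥ x = fromRows B₁ B₂ *ᵥ y ↔ A₁ *ᵥ x = B₁ *ᵥ y ∧ A₂ *ᵥ x = B₂ *ᵥ y := by
  rw [fromRows_mulVec, fromRows_mulVec, Sum.elim_eq_iff]

theorem mulVec_sub_eq_mulVec_sub_iff {R m n p : Type*} [NonUnitalNonAssocRing R] [Fintype n]
    [Fintype p] (A : Matrix m n R) (B : Matrix m p R) (x y : n → R) (u v : p → R) :
    A *ᵥ (x - y) = B *ᵥ (v - u) ↔ A *ᵥ x + B *ᵥ u = A *ᵥ y + B *ᵥ v := by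
  rw [mulVec_sub, mulVec_sub, sub_eq_sub_iff_add_eq_add, add_comm (B *ᵥ v)]

namespace HybridZonotope

variable {n ng nb nc : ℕ}
  (Gc : Matrix (Fin n) (Fin ng) ℝ) (Gb : Matrix (Fin n) (Fin nb) ℝ)
  (Ac : Matrix (Fin nc) (Fin ng) ℝ) (Ab : Matrix (Fin nc) (Fin nb) ℝ)
  (c : Fin n → ℝ)

theorem fromRows_mulVec_sub_eq_iff {b : Fin nc → ℝ} {ξbi : Fin nb → ℝ} {ξ : Fin ng → ℝ}
    (hξ : Ac *ᵥ ξ = b - Ab *ᵥ ξbi) (ξbj : Fin nb → ℝ) (η : Fin ng → ℝ) :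
    fromRows Gc Ac *ᵥ (ξ - η) = fromRows Gb Ab *ᵥ (ξbj - ξbi) ↔
      Ac *ᵥ η = b - Ab *ᵥ ξbj ∧ Gc *ᵥ ξ + c + Gb *ᵥ ξbi = Gc *ᵥ η + c + Gb *ᵥ ξbj := by
  rw [fromRows_mulVec_eq_fromRows_mulVec_iff, mulVec_sub_eq_mulVec_sub_iff,
    mulVec_sub_eq_mulVec_sub_iff, hξ, sub_add_cancel, eq_sub_iff_add_eq, eq_comm (a := b),
    add_right_comm _ c, add_right_comm _ c, add_left_inj, and_comm]

theorem leaf_inter_leaf_nonempty_iff (b : Fin nc → ℝ) (ξbi ξbj : Fin nb → ℝ) :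
    (leaf Gc Gb Ac Ab c b ξbi ∩ leaf Gc Gb Ac Ab c b ξbj).Nonempty ↔
      ∃ ξc Δξc : Fin ng → ℝ,
        fromRows Gc Ac *ᵥ Δξc = fromRows Gb Ab *ᵥ (ξbj - ξbi) ∧
        Ac *ᵥ ξc = b - Ab *ᵥ ξbi ∧
        (∀ k, |ξc k| ≤ 1) ∧ (∀ k, |ξc k - Δξc k| ≤ 1) := by
  constructor
  · rintro ⟨z, ⟨ξ, hξ_box, hξ, hzξ⟩, ⟨η, hη_box, hη, hzη⟩⟩
    have hΔ := (fromRows_mulVec_sub_eq_iff Gc Gb Ac Ab c hξ ξbj η).2 ⟨hη, hzξ.symm.trans hzη⟩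
    exact ⟨ξ, ξ - η, hΔ, hξ, hξ_box, by simpa using hη_box⟩
  · rintro ⟨ξ, Δξ, hΔ, hξ, hξ_box, hη_box⟩
    rw [← sub_sub_cancel ξ Δξ] at hΔ
    obtain ⟨hη, hz⟩ := (fromRows_mulVec_sub_eq_iff Gc Gb Ac Ab c hξ ξbj (ξ - Δξ)).1 hΔ
    exact ⟨_, ⟨ξ, hξ_box, hξ, rfl⟩, ⟨ξ - Δξ, hη_box, hη, hz⟩⟩

end HybridZonotope

theorem leaves_inter_nonempty_iff_general {n ng nb nc : ℕ}
    (Gc : Matrix (Fin n) (Fin ng) ℝ) (Gb : Matrix (Fin n) (Fin nb) ℝ)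
    (Ac : Matrix (Fin nc) (Fin ng) ℝ) (Ab : Matrix (Fin nc) (Fin nb) ℝ)
    (c : Fin n → ℝ) (b : Fin nc → ℝ)
    (ξbi ξbj : Fin nb → ℝ)
    (M : Matrix (Fin n ⊕ Fin nc) (Fin ng) ℝ) (hM : M = Matrix.fromRows Gc Ac)
    (N : Matrix (Fin n ⊕ Fin nc) (Fin nb) ℝ) (hN : N = Matrix.fromRows Gb Ab)
    (P : Matrix (Fin ng) (Fin n ⊕ Fin nc) ℝ) (hP : M * P * M = M)
    (L : Matrix (Fin n ⊕ Fin nc) (Fin nb) ℝ) (hL : L = (1 - M * P) * N) :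
    (HybridZonotope.leaf Gc Gb Ac Ab c b ξbi ∩
      HybridZonotope.leaf Gc Gb Ac Ab c b ξbj).Nonempty ↔
    (L *ᵥ (ξbj - ξbi) = 0 ∧
      ∃ ξc Δξc : Fin ng → ℝ,
        M *ᵥ Δξc = N *ᵥ (ξbj - ξbi) ∧
        Ac *ᵥ ξc = b - Ab *ᵥ ξbi ∧
        (∀ k, |ξc k| ≤ 1) ∧ (∀ k, |ξc k - Δξc k| ≤ 1)) := by
  subst hM hN hL
  rw [HybridZonotope.leaf_inter_leaf_nonempty_iff, ← mulVec_mulVec,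
    ← exists_mulVec_eq_iff_one_sub_mul_mulVec_eq_zero hP]
  exact (and_iff_right_of_imp fun ⟨_, Δξc, hΔ, _⟩ => ⟨Δξc, hΔ⟩).symm

/-- Adjacency characterization: with `M = [Gᶜ; Aᶜ]`, `N = [Gᵇ; Aᵇ]`,
`M P M = M` and `L = (I − M P) N`, two leaves intersect iff `L Δξᵇ = 0`
and the feasibility system has a solution. -/
theorem leaves_inter_nonempty_iff {n ng nb nc : ℕ}
    (Gc : Matrix (Fin n) (Fin ng) ℝ) (Gb : Matrix (Fin n) (Fin nb) ℝ)
    (Ac : Matrix (Fin nc) (Fin ng) ℝ) (Ab : Matrix (Fin nc) (Fin nb) ℝ)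
    (c : Fin n → ℝ) (b : Fin nc → ℝ)
    (ξbi ξbj : Fin nb → ℝ)
    (hbi : ∀ k, ξbi k = 1 ∨ ξbi k = -1) (hbj : ∀ k, ξbj k = 1 ∨ ξbj k = -1)
    (M : Matrix (Fin n ⊕ Fin nc) (Fin ng) ℝ) (hM : M = Matrix.fromRows Gc Ac)
    (N : Matrix (Fin n ⊕ Fin nc) (Fin nb) ℝ) (hN : N = Matrix.fromRows Gb Ab)
    (P : Matrix (Fin ng) (Fin n ⊕ Fin nc) ℝ) (hP : M * P * M = M)
    (L : Matrix (Fin n ⊕ Fin nc) (Fin nb) ℝ) (hL : L = (1 - M * P) * N) :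
    (HybridZonotope.leaf Gc Gb Ac Ab c b ξbi ∩
      HybridZonotope.leaf Gc Gb Ac Ab c b ξbj).Nonempty ↔
    (L *ᵥ (ξbj - ξbi) = 0 ∧
      ∃ ξc Δξc : Fin ng → ℝ,
        M *ᵥ Δξc = N *ᵥ (ξbj - ξbi) ∧
        Ac *ᵥ ξc = b - Ab *ᵥ ξbi ∧
        (∀ k, |ξc k| ≤ 1) ∧ (∀ k, |ξc k - Δξc k| ≤ 1)) := by
  exact leaves_inter_nonempty_iff_general Gc Gb Ac Ab c b ξbi ξbj M hM N hN P hP L hL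
end
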